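/- Let n = 2m be a positive even integer. Let H be a complex Hilbert space with grading operator ε, F a bounded operator with F² = 1 and Fε = −εF, A a ℂ-algebra, and ρ : A → B(H) an algebra homomorphism into even operators with Fρ(a) − ρ(a)F (n+1)-Schatten for all a ∈ A. Then the (n+1)-linear functional τⁿ on A defined by τⁿ(a₀, a₁, …, aₙ) := (2iπ)^m m!·Tr_s(ρ(a₀)dρ(a₁)⋯dρ(aₙ)) is well defined (the relevant graded commutator with F is trace class) and is a cyclic cocycle: τⁿ(a₁, …, aₙ, a₀) = (−1)ⁿ τⁿ(a₀, …, aₙ) (i.e. τⁿ ∈ C^n_λ(A)) and bτⁿ = 0, so τⁿ ∈ Z^n_λ(A). -/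

import Mathlib

open scoped ENNReal

noncomputable section

variable {H : Type*} [NormedAddCommGroup H] [InnerProductSpace ℂ H] [CompleteSpace H]
variable {A : Type*} [NonUnitalRing A] [Module ℂ A] [SMulCommClass ℂ A A] [IsScalarTower ℂ A A]

/-- The `n`-th singular value of a (compact) operator `T` (approximation numbers). -/
def sval (T : H →L[ℂ] H) (n : ℕ) : ℝ :=
  sInf {c : ℝ | ∃ R : H →L[ℂ] H,
    Module.rank ℂ (LinearMap.range (R : H →ₗ[ℂ] H)) ≤ (n : Cardinal) ∧ c = ‖T - R‖}

/-- The `p`-Schatten norm `‖T‖_p = (Σ_n s_n(T)^p)^(1/p)`, valued in `ℝ≥0∞`. -/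
def schattenNorm (p : ℝ) (T : H →L[ℂ] H) : ℝ≥0∞ :=
  (∑' n : ℕ, ENNReal.ofReal (sval T n ^ p)) ^ (1 / p)

/-- `T` is a `p`-Schatten operator: compact with finite `p`-Schatten norm. -/
def MemSchatten (p : ℝ) (T : H →L[ℂ] H) : Prop :=
  IsCompactOperator (⇑T) ∧ schattenNorm p T < ⊤

/-- The trace of an operator, computed in a (choice of) Hilbert basis of `H`. -/
def opTrace (T : H →L[ℂ] H) : ℂ :=
  ∑' i : (exists_hilbertBasis ℂ H).choose,
    @inner ℂ H _ ((exists_hilbertBasis ℂ H).choose_spec.choose i)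
      (T ((exists_hilbertBasis ℂ H).choose_spec.choose i))

/-- The even part of `θ` with respect to the grading `ε`. -/
def evenPart (ε θ : H →L[ℂ] H) : H →L[ℂ] H := (2 : ℂ)⁻¹ • (θ + ε * θ * ε)

/-- The odd part of `θ` with respect to the grading `ε`. -/
def oddPart (ε θ : H →L[ℂ] H) : H →L[ℂ] H := (2 : ℂ)⁻¹ • (θ - ε * θ * ε)

/-- The graded commutator `[F, θ]`, extended additively from homogeneous operators. -/
def gComm (ε F θ : H →L[ℂ] H) : H →L[ℂ] H :=
  (F * evenPart ε θ - evenPart ε θ * F) + (F * oddPart ε θ + oddPart ε θ * F)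

/-- The graded trace `Tr_s(θ) := (1/2)·Trace(εF[F,θ])`. -/
def Trs (ε F θ : H →L[ℂ] H) : ℂ := (2 : ℂ)⁻¹ * opTrace (ε * F * gComm ε F θ)

/-- `dT = i(FT - TF)` for an even operator `T`. -/
def dOp (F T : H →L[ℂ] H) : H →L[ℂ] H := Complex.I • (F * T - T * F)

/-- The ordered product `f s * f (s+1) * ⋯ * f (s+k-1)` of operators. -/
def opList (f : ℕ → H →L[ℂ] H) (s k : ℕ) : H →L[ℂ] H := ((List.range' s k).map f).prod

/-- The operator `ρ(a₀)·dρ(a₁)⋯dρ(a_k)`. -/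
def charOp (ρf : A → H →L[ℂ] H) (F : H →L[ℂ] H) (k : ℕ) (a : Fin (k + 1) → A) :
    H →L[ℂ] H :=
  ρf (a 0) *
    opList (fun j => dOp F (ρf (a ⟨j % (k + 1), Nat.mod_lt _ (Nat.succ_pos k)⟩))) 1 k

/-- The `k`-dimensional character `τ(a₀,…,a_k) = (2iπ)^mm · mm! · Tr_s(ρ(a₀)dρ(a₁)⋯dρ(a_k))`. -/
def tauChar (ρf : A → H →L[ℂ] H) (ε F : H →L[ℂ] H) (mm k : ℕ) (a : Fin (k + 1) → A) : ℂ :=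
  (2 * Complex.I * (Real.pi : ℂ)) ^ mm * (Nat.factorial mm : ℂ) * Trs ε F (charOp ρf F k a)

/-- The Hochschild coboundary `b` on `(k+1)`-linear functionals. -/
def hochB {A : Type*} [Mul A] (k : ℕ) (ψ : (Fin (k + 1) → A) → ℂ) :
    (Fin (k + 2) → A) → ℂ := fun a =>
  (∑ i : Fin (k + 1), (-1 : ℂ) ^ (i : ℕ) *
    ψ (fun j => if (j : ℕ) < (i : ℕ) then a j.castSucc
        else if (j : ℕ) = (i : ℕ) then a j.castSucc * a j.succ
        else a j.succ)) +
  (-1 : ℂ) ^ (k + 1) * ψ (fun j => if (j : ℕ) = 0 then a (Fin.last (k + 1)) * a 0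
    else a j.castSucc)

/-!
By Hölder's inequality for Schatten ideals a product of `n + 1` operators of Schatten class `n + 1`
is trace class. Since `[F, ρ(a)]` anticommutes with both `ε` and `F`, the character is, up to a
scalar, the trace of `εF [F, ρ(a₀)] ⋯ [F, ρ(aₙ)]`, where `εF` commutes with every factor. Cyclicity
is then the trace property. The derivation `[F, ρ(·)]` turns the `i`-th face of this functional into
`Xᵢ₊₁ + Xᵢ`, where `Xᵢ` is obtained by replacing the `i`-th commutator by `ρ(aᵢ)`, and by
cyclicity the last face equals `X₀ + Xₙ₊₁`; the alternating sum defining `b` telescopes to zero.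

The trace class is defined through approximation numbers, the trace through one fixed basis. A
Schmidt decomposition `T = ∑ᵢ sᵢ ⟨eᵢ, ·⟩ fᵢ` of a compact operator connects the two: the sum of the
`sᵢ` is bounded by that of the approximation numbers, and both `Tr(ST)` and `Tr(TS)` equal
`∑ᵢ sᵢ ⟨eᵢ, S fᵢ⟩`.
-/

open scoped InnerProductSpace
open Finset (range)

universe u v

section ApproximationNumbers

variable {E : Type*} [NormedAddCommGroup E] [InnerProductSpace ℂ E] {S T : E →L[ℂ] E}

lemma sval_nonneg (T : E →L[ℂ] E) (n : ℕ) : 0 ≤ sval T n := by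
  refine Real.sInf_nonneg ?_
  rintro c ⟨R, -, rfl⟩
  exact norm_nonneg _

lemma sval_le_norm_sub (T : E →L[ℂ] E) {R : E →L[ℂ] E} {n : ℕ}
    (hR : LinearMap.rank (R : E →ₗ[ℂ] E) ≤ n) : sval T n ≤ ‖T - R‖ := by
  refine csInf_le ⟨0, ?_⟩ ⟨R, hR, rfl⟩
  rintro c ⟨R, -, rfl⟩
  exact norm_nonneg _

lemma le_sval {c : ℝ} {n : ℕ}
    (h : ∀ R : E →L[ℂ] E, LinearMap.rank (R : E →ₗ[ℂ] E) ≤ n → c ≤ ‖T - R‖) : c ≤ sval T n := by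
  refine le_csInf ⟨‖T - 0‖, 0, by simp, rfl⟩ ?_
  rintro _ ⟨R, hR, rfl⟩
  exact h R hR

lemma exists_norm_sub_lt_of_sval_lt {c : ℝ} {n : ℕ} (h : sval T n < c) :
    ∃ R : E →L[ℂ] E, LinearMap.rank (R : E →ₗ[ℂ] E) ≤ n ∧ ‖T - R‖ < c := by
  by_contra! hc
  exact h.not_ge (le_sval hc)

lemma sval_antitone (T : E →L[ℂ] E) : Antitone (sval T) := fun _ _ hmn =>
  le_sval fun _ hR => sval_le_norm_sub T (hR.trans (by exact_mod_cast hmn))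

lemma sval_le_norm (T : E →L[ℂ] E) (n : ℕ) : sval T n ≤ ‖T‖ := by
  simpa using sval_le_norm_sub T (R := 0) (n := n) (by simp)

lemma sval_mul_le (S T : E →L[ℂ] E) (j k : ℕ) : sval (S * T) (j + k) ≤ sval S j * sval T k := by
  refine le_mul_of_forall_lt₀ fun c hc d hd => ?_
  obtain ⟨P, hP, hPc⟩ := exists_norm_sub_lt_of_sval_lt hc
  obtain ⟨Q, hQ, hQd⟩ := exists_norm_sub_lt_of_sval_lt hd
  have hrank : LinearMap.rank ((P * (T - Q) + S * Q : E →L[ℂ] E) : E →ₗ[ℂ] E) ≤ (j + k : ℕ) := by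
    push_cast
    exact (LinearMap.rank_add_le _ _).trans <| add_le_add
      ((LinearMap.rank_comp_le_left _ _).trans hP) ((LinearMap.rank_comp_le_right _ _).trans hQ)
  calc sval (S * T) (j + k) ≤ ‖S * T - (P * (T - Q) + S * Q)‖ := sval_le_norm_sub _ hrank
    _ = ‖(S - P) * (T - Q)‖ := by congr 1; noncomm_ring
    _ ≤ ‖S - P‖ * ‖T - Q‖ := norm_mul_le _ _
    _ ≤ c * d := mul_le_mul hPc.le hQd.le (norm_nonneg _) ((sval_nonneg _ _).trans hc.le)

lemma sval_mul_le_norm_mul (S T : E →L[ℂ] E) (n : ℕ) : sval (S * T) n ≤ ‖S‖ * sval T n := by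
  calc sval (S * T) n ≤ sval S 0 * sval T n := by simpa using sval_mul_le S T 0 n
    _ ≤ ‖S‖ * sval T n := by gcongr; exacts [sval_nonneg _ _, sval_le_norm _ _]

lemma sval_mul_le_mul_norm (S T : E →L[ℂ] E) (n : ℕ) : sval (S * T) n ≤ sval S n * ‖T‖ := by
  calc sval (S * T) n ≤ sval S n * sval T 0 := sval_mul_le S T n 0
    _ ≤ sval S n * ‖T‖ := by gcongr; exacts [sval_nonneg _ _, sval_le_norm _ _]

end ApproximationNumbers

lemma summable_of_antitone_of_summable_even {g : ℕ → ℝ} (hg : Antitone g) (h0 : ∀ n, 0 ≤ g n)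
    (h : Summable fun n => g (2 * n)) : Summable g :=
  have hodd : Summable fun n => g (2 * n + 1) :=
    h.of_nonneg_of_le (fun _ => h0 _) fun n => hg (Nat.le_succ (2 * n))
  (h.hasSum.even_add_odd hodd.hasSum).summable

section SchattenIdeal

variable {E : Type*} [NormedAddCommGroup E] [InnerProductSpace ℂ E] {S T : E →L[ℂ] E} {p q r : ℝ}

lemma memSchatten_iff_summable (hp : 0 < p) :
    MemSchatten p T ↔ IsCompactOperator T ∧ Summable fun n => sval T n ^ p := by
  have h0 : ∀ n, 0 ≤ sval T n ^ p := fun n => Real.rpow_nonneg (sval_nonneg T n) p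
  rw [MemSchatten, schattenNorm, ENNReal.rpow_lt_top_iff_of_pos (by positivity)]
  refine and_congr_right fun _ => ⟨fun h => ?_, fun h => ?_⟩
  · exact (ENNReal.summable_toReal h.ne).congr fun n => ENNReal.toReal_ofReal (h0 n)
  · exact h.tsum_ofReal_lt_top

lemma MemSchatten.summable_sval (h : MemSchatten 1 T) : Summable (sval T) := by
  simpa using ((memSchatten_iff_summable one_pos).1 h).2

lemma MemSchatten.const_mul (hp : 0 < p) (S : E →L[ℂ] E) (hT : MemSchatten p T) :
    MemSchatten p (S * T) := by
  rw [memSchatten_iff_summable hp] at hT ⊢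
  refine ⟨hT.1.clm_comp S, (hT.2.mul_left (‖S‖ ^ p)).of_nonneg_of_le
    (fun n => Real.rpow_nonneg (sval_nonneg _ n) p) fun n => ?_⟩
  rw [← Real.mul_rpow (norm_nonneg _) (sval_nonneg _ _)]
  exact Real.rpow_le_rpow (sval_nonneg _ _) (sval_mul_le_norm_mul S T n) hp.le

lemma MemSchatten.mul_const (hp : 0 < p) (hS : MemSchatten p S) (T : E →L[ℂ] E) :
    MemSchatten p (S * T) := by
  rw [memSchatten_iff_summable hp] at hS ⊢
  refine ⟨hS.1.comp_clm T, (hS.2.mul_right (‖T‖ ^ p)).of_nonneg_of_le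
    (fun n => Real.rpow_nonneg (sval_nonneg _ n) p) fun n => ?_⟩
  rw [← Real.mul_rpow (sval_nonneg _ _) (norm_nonneg _)]
  exact Real.rpow_le_rpow (sval_nonneg _ _) (sval_mul_le_mul_norm S T n) hp.le

lemma MemSchatten.const_smul (hp : 0 < p) (c : ℂ) (hT : MemSchatten p T) :
    MemSchatten p (c • T) := by
  simpa using hT.const_mul hp (c • 1)

lemma MemSchatten.mul (hpqr : p.HolderTriple q r) (hS : MemSchatten p S) (hT : MemSchatten q T) :
    MemSchatten r (S * T) := by
  rw [memSchatten_iff_summable hpqr.pos] at hS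
  rw [memSchatten_iff_summable hpqr.symm.pos] at hT
  rw [memSchatten_iff_summable hpqr.pos']
  have h0 : ∀ n, 0 ≤ sval (S * T) n := sval_nonneg _
  refine ⟨hT.1.clm_comp S, summable_of_antitone_of_summable_even
    (fun m n hmn => Real.rpow_le_rpow (h0 n) (sval_antitone _ hmn) hpqr.nonneg')
    (fun n => Real.rpow_nonneg (h0 n) r) ?_⟩
  refine (Real.summable_Lr_of_Lp_Lq_of_nonneg hpqr (sval_nonneg S) (sval_nonneg T)
    hS.2 hT.2).of_nonneg_of_le (fun n => Real.rpow_nonneg (h0 _) r) fun n => ?_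
  refine Real.rpow_le_rpow (h0 _) ?_ hpqr.nonneg'
  simpa [two_mul] using sval_mul_le S T n n

lemma holderTriple_div_add_one {k : ℝ} (hp : 0 < p) (hk : 0 < k) :
    p.HolderTriple (p / k) (p / (k + 1)) where
  left_pos := hp
  right_pos := by positivity
  inv_add_inv_eq_inv := by
    field_simp
    ring

lemma MemSchatten.list_prod (hp : 0 < p) {l : List (E →L[ℂ] E)} (hl : l ≠ [])
    (h : ∀ T ∈ l, MemSchatten p T) : MemSchatten (p / l.length) l.prod := by
  induction l with
  | nil => exact absurd rfl hl
  | cons T l ih =>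
    rw [List.forall_mem_cons] at h
    rcases eq_or_ne l [] with rfl | hl
    · simpa using h.1
    have hlen : (0 : ℝ) < l.length := by exact_mod_cast List.length_pos_of_ne_nil hl
    rw [List.prod_cons, List.length_cons, Nat.cast_add_one]
    exact h.1.mul (holderTriple_div_add_one hp hlen) (ih hl h.2)

end SchattenIdeal

section SchmidtDecomposition

variable {E : Type*} [NormedAddCommGroup E] [InnerProductSpace ℂ E] {ι : Type*}

/-- A Schmidt (or singular value) decomposition `T = ∑ᵢ sᵢ ⟨eᵢ, ·⟩ fᵢ` of a compact operator. The
numbers `sᵢ` are indexed by an arbitrary type, so neither an ordering nor decay is imposed. -/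
structure IsSchmidtDecomposition (T : E →L[ℂ] E) (e f : ι → E) (s : ι → ℝ) : Prop where
  orthonormal_left : Orthonormal ℂ e
  orthonormal_right : Orthonormal ℂ f
  nonneg : ∀ i, 0 ≤ s i
  hasSum : ∀ v, HasSum (fun i => ((s i : ℂ) * ⟪e i, v⟫_ℂ) • f i) (T v)

lemma exists_sum_smul_mem_ker_of_rank_lt {V W : Type*} [AddCommGroup V] [Module ℂ V]
    [AddCommGroup W] [Module ℂ W] [Fintype ι] {R : V →ₗ[ℂ] W} {n : ℕ} (hR : R.rank ≤ n)
    (hn : n < Fintype.card ι) (v : ι → V) : ∃ a : ι → ℂ, a ≠ 0 ∧ R (∑ i, a i • v i) = 0 := by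
  have : FiniteDimensional ℂ R.range :=
    Module.rank_lt_aleph0_iff.1 (hR.trans_lt Cardinal.natCast_lt_aleph0)
  have hlt : Module.finrank ℂ R.range < Module.finrank ℂ (ι → ℂ) := by
    rw [Module.finrank_fintype_fun_eq_card]
    exact (Module.finrank_le_of_rank_le hR).trans_lt hn
  obtain ⟨a, ha, ha0⟩ := Submodule.exists_mem_ne_zero_of_ne_bot <|
    (R.rangeRestrict ∘ₗ Fintype.linearCombination ℂ v).ker_ne_bot_of_finrank_lt hlt
  refine ⟨a, ha0, ?_⟩
  simpa [Fintype.linearCombination_apply] using congrArg Subtype.val (LinearMap.mem_ker.1 ha)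

lemma norm_sq_sum_smul_of_orthonormal [Fintype ι] {v : ι → E} (hv : Orthonormal ℂ v) (a : ι → ℂ) :
    ‖∑ i, a i • v i‖ ^ 2 = ∑ i, ‖a i‖ ^ 2 := by
  have h := hv.inner_sum a a Finset.univ
  simp only [inner_self_eq_norm_sq_to_K, RCLike.conj_mul] at h
  exact_mod_cast h

namespace IsSchmidtDecomposition

variable {T : E →L[ℂ] E} {e f : ι → E} {s : ι → ℝ}

lemma apply_left (h : IsSchmidtDecomposition T e f s) (i : ι) : T (e i) = (s i : ℂ) • f i := by
  rw [← (h.hasSum (e i)).tsum_eq, tsum_eq_single i fun j hj => by simp [h.orthonormal_left.2 hj]]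
  simp [h.orthonormal_left.1 i]

lemma inner_right_apply (h : IsSchmidtDecomposition T e f s) (i : ι) (v : E) :
    ⟪f i, T v⟫_ℂ = s i * ⟪e i, v⟫_ℂ := by
  rw [← innerSL_apply_apply ℂ, ← ((h.hasSum v).mapL (innerSL ℂ (f i))).tsum_eq,
    tsum_eq_single i fun j hj => by simp [h.orthonormal_right.2 hj.symm]]
  simp [h.orthonormal_right.1 i]

lemma apply_eq_zero (h : IsSchmidtDecomposition T e f s) {v : E} (hv : ∀ i, ⟪e i, v⟫_ℂ = 0) :
    T v = 0 :=
  (h.hasSum v).unique (by simp [hv, hasSum_zero])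

lemma inner_apply_eq_zero (h : IsSchmidtDecomposition T e f s) {v : E}
    (hv : ∀ i, ⟪f i, v⟫_ℂ = 0) (w : E) : ⟪v, T w⟫_ℂ = 0 :=
  ((h.hasSum w).mapL (innerSL ℂ v)).unique (by simp [inner_eq_zero_symm.1 (hv _), hasSum_zero])

lemma le_sval (h : IsSchmidtDecomposition T e f s) {t : Finset ι} {n : ℕ} (hn : n < t.card)
    {c : ℝ} (hc0 : 0 ≤ c) (hc : ∀ i ∈ t, c ≤ s i) : c ≤ sval T n := by
  refine _root_.le_sval fun R hR => ?_
  -- `R` kills a nonzero vector of the span of `e i`, `i ∈ t`, on which `T` expands by at least `c`.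
  obtain ⟨a, ha0, hRa⟩ := exists_sum_smul_mem_ker_of_rank_lt (ι := t) hR (by simpa using hn)
    fun i => e i
  set v := ∑ i : t, a i • e i
  have hv : ‖v‖ ^ 2 = ∑ i, ‖a i‖ ^ 2 := norm_sq_sum_smul_of_orthonormal
    (h.orthonormal_left.comp _ Subtype.val_injective) a
  have hTv : ‖T v‖ ^ 2 = ∑ i : t, ‖a i * s i‖ ^ 2 := by
    rw [← norm_sq_sum_smul_of_orthonormal
      (h.orthonormal_right.comp ((↑) : t → ι) Subtype.val_injective)]
    simp only [v, map_sum, map_smul, h.apply_left, smul_smul]; rfl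
  have hv0 : 0 < ‖v‖ := by
    obtain ⟨i, hi⟩ := Function.ne_iff.1 ha0
    refine (norm_nonneg v).lt_of_ne' (sq_pos_iff.1 ?_)
    rw [hv]
    exact Finset.sum_pos' (fun i _ => sq_nonneg ‖a i‖)
      ⟨i, Finset.mem_univ i, pow_pos (norm_pos_iff.2 hi) 2⟩
  refine le_of_mul_le_mul_right ?_ hv0
  calc c * ‖v‖ ≤ ‖T v‖ := by
        refine le_of_sq_le_sq ?_ (norm_nonneg _)
        rw [mul_pow, hv, hTv, Finset.mul_sum]
        refine Finset.sum_le_sum fun i _ => ?_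
        rw [norm_mul, mul_pow, mul_comm, Complex.norm_of_nonneg (h.nonneg i)]
        gcongr
        exact hc i i.2
    _ = ‖(T - R) v‖ := by
        rw [sub_apply, show R v = 0 from hRa, sub_zero]
    _ ≤ ‖T - R‖ * ‖v‖ := (T - R).le_opNorm v

lemma sum_le_sum_sval (h : IsSchmidtDecomposition T e f s) (t : Finset ι) :
    ∑ i ∈ t, s i ≤ ∑ n ∈ range t.card, sval T n := by
  classical
  induction t using Finset.induction_on_min_value s with
  | empty => simp
  | insert i t hi hmin ih =>
    rw [Finset.sum_insert hi, Finset.card_insert_of_notMem hi, Finset.sum_range_succ, add_comm]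
    refine add_le_add ih (h.le_sval (t := insert i t) ?_ (h.nonneg i) ?_)
    · simp [Finset.card_insert_of_notMem hi]
    · exact (Finset.forall_mem_insert _ _ _).2 ⟨le_rfl, hmin⟩

lemma summable (h : IsSchmidtDecomposition T e f s) (hT : Summable (sval T)) : Summable s :=
  summable_of_sum_le h.nonneg fun t =>
    (h.sum_le_sum_sval t).trans (hT.sum_le_tsum _ fun n _ => sval_nonneg T n)

end IsSchmidtDecomposition

end SchmidtDecomposition

section CompactOperators

variable {E : Type u} [NormedAddCommGroup E] [InnerProductSpace ℂ E] [CompleteSpace E]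

lemma exists_hilbertBasis_mem_of_orthogonalFamily {α : Type v} {V : α → Submodule ℂ E}
    [∀ i, CompleteSpace (V i)] (hV : OrthogonalFamily ℂ (fun i => V i) fun i => (V i).subtypeₗᵢ)
    (hbot : (⨆ i, V i)ᗮ = ⊥) :
    ∃ (κ : Type (max u v)) (b : HilbertBasis κ ℂ E), ∀ k, ∃ i, b k ∈ V i := by
  choose w b _ using fun i => exists_hilbertBasis ℂ (V i)
  let v : (Σ i, w i) → E := fun p => b p.1 p.2
  have hv : Orthonormal ℂ v :=
    hV.orthonormal_sigma_orthonormal (v_family := fun i => b i) fun i => (b i).orthonormal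
  have hspan : (Submodule.span ℂ (Set.range v))ᗮ = ⊥ := by
    rw [eq_bot_iff, ← hbot, ← Submodule.iInf_orthogonal]
    refine fun x hx => (Submodule.mem_iInf _).2 fun i => ((V i).mem_orthogonal' x).2 fun z hz => ?_
    have hxv : ∀ k : w i, ⟪x, (b i k : E)⟫_ℂ = 0 := fun k =>
      (Submodule.mem_orthogonal' _ x).1 hx _ (Submodule.subset_span ⟨⟨i, k⟩, rfl⟩)
    exact (((b i).hasSum_repr ⟨z, hz⟩).mapL ((innerSL ℂ x).comp (V i).subtypeL)).unique
      (by simp [hxv, hasSum_zero])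
  refine ⟨Σ i, w i, HilbertBasis.mkOfOrthogonalEqBot hv hspan, fun p => ⟨p.1, ?_⟩⟩
  rw [HilbertBasis.coe_mkOfOrthogonalEqBot]
  exact (b p.1 p.2).2

lemma exists_hilbertBasis_eigenvectors {T : E →L[ℂ] E} (hT : IsCompactOperator T)
    (hsymm : T.IsSymmetric) :
    ∃ (κ : Type u) (b : HilbertBasis κ ℂ E), ∀ k, ∃ μ : ℂ, T (b k) = μ • b k := by
  obtain ⟨κ, b, hb⟩ := exists_hilbertBasis_mem_of_orthogonalFamily
    hsymm.orthogonalFamily_eigenspaces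
    (ContinuousLinearMap.orthogonalComplement_iSup_eigenspaces_eq_bot hT hsymm)
  exact ⟨κ, b, fun k => (hb k).imp fun _ => Module.End.mem_eigenspace_iff.1⟩

lemma exists_hilbertBasis_orthogonal_apply {T : E →L[ℂ] E} (hT : IsCompactOperator T) :
    ∃ (κ : Type u) (b : HilbertBasis κ ℂ E), Pairwise fun j k => ⟪T (b j), T (b k)⟫_ℂ = 0 := by
  obtain ⟨κ, b, hb⟩ := exists_hilbertBasis_eigenvectors
    (hT.clm_comp (ContinuousLinearMap.adjoint T))
    (ContinuousLinearMap.isSelfAdjoint_iff_isSymmetric.1 (IsSelfAdjoint.star_mul_self T))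
  refine ⟨κ, b, fun j k hjk => ?_⟩
  obtain ⟨μ, hμ⟩ := hb k
  have hμ' : ContinuousLinearMap.adjoint T (T (b k)) = μ • b k := hμ
  rw [← ContinuousLinearMap.adjoint_inner_right, hμ', inner_smul_right, b.orthonormal.2 hjk,
    mul_zero]

lemma exists_isSchmidtDecomposition {T : E →L[ℂ] E} (hT : IsCompactOperator T) :
    ∃ (ι : Type u) (e f : ι → E) (s : ι → ℝ), IsSchmidtDecomposition T e f s := by
  obtain ⟨κ, b, hb⟩ := exists_hilbertBasis_orthogonal_apply hT
  let f : {k | T (b k) ≠ 0} → E := fun k => (‖T (b k)‖ : ℂ)⁻¹ • T (b k)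
  have hf : ∀ k : {k | T (b k) ≠ 0}, (‖T (b k)‖ : ℂ) • f k = T (b k) := fun k =>
    smul_inv_smul₀ (Complex.ofReal_ne_zero.2 (norm_ne_zero_iff.2 k.2)) _
  refine ⟨{k | T (b k) ≠ 0}, fun k => b k, f, fun k => ‖T (b k)‖,
    b.orthonormal.comp _ Subtype.val_injective, ⟨fun k => ?_, fun j k hjk => ?_⟩,
    fun k => norm_nonneg _, fun v => ?_⟩
  · exact norm_smul_inv_norm k.2
  · simp only [f, inner_smul_left, inner_smul_right, hb (Subtype.val_injective.ne hjk), mul_zero]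
  · have hv : HasSum (fun k => ⟪b k, v⟫_ℂ • T (b k)) (T v) := by
      simpa [b.repr_apply_apply] using (b.hasSum_repr v).mapL T
    have hsupp : (Function.support fun k => ⟪b k, v⟫_ℂ • T (b k)) ⊆ {k | T (b k) ≠ 0} :=
      Function.support_smul_subset_right _ _
    rw [← hasSum_subtype_iff_of_support_subset hsupp] at hv
    refine hv.congr_fun fun k => ?_
    rw [mul_comm, mul_smul, hf, Function.comp_apply]

end CompactOperators

section Trace

lemma summable_prod_of_sum_norm_le {ι κ V : Type*} [NormedAddCommGroup V] [CompleteSpace V]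
    {g : ι × κ → V} {c : ι → ℝ} (hc : Summable c)
    (hg : ∀ i, ∀ t : Finset κ, ∑ k ∈ t, ‖g (i, k)‖ ≤ c i) : Summable g := by
  have hrow : ∀ i, Summable fun k => ‖g (i, k)‖ := fun i =>
    summable_of_sum_le (fun _ => norm_nonneg _) (hg i)
  refine .of_norm <| (summable_prod_of_nonneg fun _ => norm_nonneg _).2 ⟨hrow, ?_⟩
  exact hc.of_nonneg_of_le (fun i => tsum_nonneg fun _ => norm_nonneg _)
    fun i => (hrow i).tsum_le_of_sum_le (hg i)

lemma sum_norm_inner_mul_inner_le_of_orthonormal {E κ : Type*} [NormedAddCommGroup E]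
    [InnerProductSpace ℂ E] {b : κ → E} (hb : Orthonormal ℂ b) (x y : E) (t : Finset κ) :
    ∑ k ∈ t, ‖⟪x, b k⟫_ℂ * ⟪b k, y⟫_ℂ‖ ≤ ‖x‖ * ‖y‖ := by
  simp only [norm_mul, norm_inner_symm x]
  refine le_of_sq_le_sq ?_ (by positivity)
  calc (∑ k ∈ t, ‖⟪b k, x⟫_ℂ‖ * ‖⟪b k, y⟫_ℂ‖) ^ 2
      ≤ (∑ k ∈ t, ‖⟪b k, x⟫_ℂ‖ ^ 2) * ∑ k ∈ t, ‖⟪b k, y⟫_ℂ‖ ^ 2 :=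
        Finset.sum_mul_sq_le_sq_mul_sq _ _ _
    _ ≤ ‖x‖ ^ 2 * ‖y‖ ^ 2 := by
        gcongr
        exacts [hb.sum_inner_products_le x, hb.sum_inner_products_le y]
    _ = (‖x‖ * ‖y‖) ^ 2 := (mul_pow _ _ _).symm

lemma IsSchmidtDecomposition.hasSum_inner_apply {E ι κ : Type*} [NormedAddCommGroup E]
    [InnerProductSpace ℂ E] {T : E →L[ℂ] E} {e f : ι → E} {s : ι → ℝ}
    (h : IsSchmidtDecomposition T e f s) (hs : Summable s) (b : HilbertBasis κ ℂ E) :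
    HasSum (fun k => ⟪b k, T (b k)⟫_ℂ) (∑' i, s i * ⟪e i, f i⟫_ℂ) := by
  let g : ι × κ → ℂ := fun p => s p.1 * (⟪e p.1, b p.2⟫_ℂ * ⟪b p.2, f p.1⟫_ℂ)
  have hg : Summable g := summable_prod_of_sum_norm_le hs fun i t => by
    simp only [g, norm_mul (s i : ℂ), Complex.norm_of_nonneg (h.nonneg i), ← Finset.mul_sum]
    refine mul_le_of_le_one_right (h.nonneg i) ?_
    simpa [h.orthonormal_left.1, h.orthonormal_right.1] using
      sum_norm_inner_mul_inner_le_of_orthonormal b.orthonormal (e i) (f i) t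
  have hrow : ∀ i, HasSum (fun k => g (i, k)) (s i * ⟪e i, f i⟫_ℂ) := fun i =>
    (b.hasSum_inner_mul_inner (e i) (f i)).mul_left _
  have hcol : ∀ k, HasSum (fun i => g (i, k)) ⟪b k, T (b k)⟫_ℂ := fun k => by
    simpa [g, inner_smul_right, mul_assoc] using (h.hasSum (b k)).mapL (innerSL ℂ (b k))
  rw [(hg.hasSum.prod_fiberwise hrow).tsum_eq]
  exact ((Equiv.prodComm κ ι).hasSum_iff.2 hg.hasSum).prod_fiberwise hcol

variable {E : Type*} [NormedAddCommGroup E] [InnerProductSpace ℂ E] [CompleteSpace E]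
  {R S T : E →L[ℂ] E}

lemma MemSchatten.hasSum_inner_apply {κ : Type*} (hT : MemSchatten 1 T) (b : HilbertBasis κ ℂ E) :
    HasSum (fun k => ⟪b k, T (b k)⟫_ℂ) (opTrace T) := by
  obtain ⟨ι, e, f, s, h⟩ := exists_isSchmidtDecomposition hT.1
  have hs := h.summable hT.summable_sval
  rw [show opTrace T = _ from (h.hasSum_inner_apply hs _).tsum_eq]
  exact h.hasSum_inner_apply hs b

lemma MemSchatten.hasSum_inner_apply_of_orthonormal {ι : Type*} (hT : MemSchatten 1 T) {e : ι → E}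
    (he : Orthonormal ℂ e) (h0 : ∀ v, (∀ i, ⟪e i, v⟫_ℂ = 0) → ⟪v, T v⟫_ℂ = 0) :
    HasSum (fun i => ⟪e i, T (e i)⟫_ℂ) (opTrace T) := by
  obtain ⟨w, b, hew, hb⟩ := he.toSubtypeRange.exists_hilbertBasis_extension
  let g : ι → w := fun i => ⟨e i, hew ⟨i, rfl⟩⟩
  have hbg : ∀ i, b (g i) = e i := fun i => congrFun hb (g i)
  have hg : Function.Injective g := fun i j hij =>
    he.linearIndependent.injective (congrArg Subtype.val hij)
  refine ((hg.hasSum_iff fun k hk => h0 (b k) fun i => ?_).2 (hT.hasSum_inner_apply b)).congr_fun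
    fun i => ?_
  · exact hbg i ▸ b.orthonormal.2 fun h => hk ⟨i, h⟩
  · rw [Function.comp_apply, hbg]

lemma opTrace_add (hS : MemSchatten 1 S) (hT : MemSchatten 1 T) :
    opTrace (S + T) = opTrace S + opTrace T := by
  simp only [opTrace, add_apply, inner_add_right]
  exact (hS.hasSum_inner_apply _).summable.tsum_add (hT.hasSum_inner_apply _).summable

lemma opTrace_smul (c : ℂ) (T : E →L[ℂ] E) : opTrace (c • T) = c * opTrace T := by
  simp only [opTrace, smul_apply, inner_smul_right, tsum_mul_left]

lemma opTrace_mul_comm (hT : IsCompactOperator T) (hST : MemSchatten 1 (S * T))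
    (hTS : MemSchatten 1 (T * S)) : opTrace (S * T) = opTrace (T * S) := by
  obtain ⟨ι, e, f, s, h⟩ := exists_isSchmidtDecomposition hT
  have hsumST : HasSum (fun i => ⟪e i, (S * T) (e i)⟫_ℂ) (opTrace (S * T)) :=
    hST.hasSum_inner_apply_of_orthonormal h.orthonormal_left fun v hv => by
      rw [mul_apply_eq_comp, h.apply_eq_zero hv, map_zero, inner_zero_right]
  have hsumTS : HasSum (fun i => ⟪f i, (T * S) (f i)⟫_ℂ) (opTrace (T * S)) :=
    hTS.hasSum_inner_apply_of_orthonormal h.orthonormal_right fun v hv =>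
      h.inner_apply_eq_zero hv (S v)
  refine hsumST.unique (hsumTS.congr_fun fun i => ?_)
  simp only [mul_apply_eq_comp, h.apply_left, map_smul, inner_smul_right,
    h.inner_right_apply]

lemma opTrace_mul_mul_comm (hT : IsCompactOperator T) (hRT : Commute R T)
    (hST : MemSchatten 1 (S * T)) (hTS : MemSchatten 1 (T * S)) :
    opTrace (R * (S * T)) = opTrace (R * (T * S)) := by
  have hcomm : R * (T * S) = T * (R * S) := by rw [← mul_assoc, hRT.eq, mul_assoc]
  rw [hcomm, ← mul_assoc]
  refine opTrace_mul_comm hT ?_ ?_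
  · simpa only [mul_assoc] using hST.const_mul one_pos R
  · simpa only [hcomm] using hTS.const_mul one_pos R

end Trace

section MarkedProd

variable {S M : Type*}

/-- The word `D(a₀) ⋯ D(aᵢ₋₁) ρ(aᵢ) D(aᵢ₊₁) ⋯ D(aₖ₋₁)`, in which `ρ` replaces `D` in the `i`-th
slot. These words are the terms of the Leibniz expansion of `D(a₀) ⋯ D(aᵢ aᵢ₊₁) ⋯ D(aₖ)`. -/
def markedProd [Monoid M] (D ρ : S → M) {k : ℕ} (a : Fin k → S) (i : Fin k) : M :=
  (List.ofFn fun j => if j = i then ρ (a j) else D (a j)).prod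

lemma markedProd_zero [Monoid M] (D ρ : S → M) {k : ℕ} (a : Fin (k + 1) → S) :
    markedProd D ρ a 0 = ρ (a 0) * (List.ofFn fun j : Fin k => D (a j.succ)).prod := by
  simp [markedProd, List.ofFn_succ]

lemma markedProd_succ [Monoid M] (D ρ : S → M) {k : ℕ} (a : Fin (k + 1) → S) (i : Fin k) :
    markedProd D ρ a i.succ = D (a 0) * markedProd D ρ (fun j => a j.succ) i := by
  simp [markedProd, List.ofFn_succ, (Fin.succ_ne_zero i).symm]

lemma markedProd_last [Monoid M] (D ρ : S → M) {k : ℕ} (a : Fin (k + 1) → S) :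
    markedProd D ρ a (Fin.last k) =
      (List.ofFn fun j : Fin k => D (a j.castSucc)).prod * ρ (a (Fin.last k)) := by
  rw [markedProd, List.ofFn_succ_last]
  simp [(Fin.castSucc_lt_last _).ne]

lemma markedProd_castSucc [Monoid M] (D ρ : S → M) {k : ℕ} (a : Fin (k + 1) → S) (i : Fin k) :
    markedProd D ρ a i.castSucc =
      markedProd D ρ (fun j => a j.castSucc) i * D (a (Fin.last k)) := by
  rw [markedProd, List.ofFn_succ_last]
  simp [markedProd, (Fin.castSucc_lt_last _).ne']

lemma prod_ofFn_contractNth [Mul S] [Semiring M] {D ρ : S → M}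
    (hD : ∀ x y, D (x * y) = D x * ρ y + ρ x * D y) {n : ℕ} (a : Fin (n + 2) → S)
    (i : Fin (n + 1)) :
    (List.ofFn fun j => D (i.castSucc.contractNth (· * ·) a j)).prod =
      markedProd D ρ a i.succ + markedProd D ρ a i.castSucc := by
  rw [List.ofFn_succ, List.prod_cons]
  cases i using Fin.cases with
  | zero =>
    rw [markedProd_succ, markedProd_zero, Fin.castSucc_zero, markedProd_zero]
    simp [Fin.contractNth, hD, List.ofFn_succ, add_mul, mul_assoc]
  | succ i =>
    cases n with
    | zero => exact i.elim0
    | succ n =>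
      have ih := prod_ofFn_contractNth hD (fun j => a j.succ) i
      rw [← Fin.succ_castSucc, markedProd_succ _ _ _ i.succ, markedProd_succ _ _ _ i.castSucc,
        ← mul_add, ← ih]
      simp [Fin.contractNth]

end MarkedProd

section TraceCochain

variable {E : Type*} [NormedAddCommGroup E] [InnerProductSpace ℂ E] {S : Type*} {n : ℕ}
  {G : E →L[ℂ] E} {D ρ : S → E →L[ℂ] E}

lemma memSchatten_prod_ofFn {p : ℝ} (hp : 0 < p) (hD : ∀ x, MemSchatten p (D x))
    (a : Fin (n + 1) → S) : MemSchatten (p / (n + 1)) (List.ofFn fun i => D (a i)).prod := by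
  have h := MemSchatten.list_prod hp (by simp : List.ofFn (fun i => D (a i)) ≠ [])
    (List.forall_mem_ofFn_iff.2 fun i => hD (a i))
  rwa [List.length_ofFn, Nat.cast_add_one] at h

lemma memSchatten_markedProd {p : ℝ} (hp : 0 < p) (hD : ∀ x, MemSchatten p (D x))
    (a : Fin (n + 2) → S) (i : Fin (n + 2)) :
    MemSchatten (p / (n + 1)) (markedProd D ρ a i) := by
  induction n with
  | zero =>
    cases i using Fin.cases with
    | zero => simpa [markedProd] using (hD (a 1)).const_mul hp (ρ (a 0))
    | succ i => simpa [markedProd, Fin.fin_one_eq_zero i] using (hD (a 0)).mul_const hp (ρ (a 1))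
  | succ n ih =>
    cases i using Fin.cases with
    | zero =>
      rw [markedProd_zero]
      exact (memSchatten_prod_ofFn hp hD fun j => a j.succ).const_mul (by positivity) (ρ (a 0))
    | succ i =>
      rw [markedProd_succ, Nat.cast_add_one]
      exact (hD (a 0)).mul (holderTriple_div_add_one hp n.cast_add_one_pos)
        (ih (fun j => a j.succ) i)

lemma memSchatten_one_prod_ofFn (hD : ∀ x, MemSchatten ((n : ℝ) + 1) (D x))
    (a : Fin (n + 1) → S) : MemSchatten 1 (List.ofFn fun i => D (a i)).prod := by
  have hn : (0 : ℝ) < n + 1 := n.cast_add_one_pos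
  simpa only [div_self hn.ne'] using memSchatten_prod_ofFn hn hD a

lemma memSchatten_one_markedProd (hD : ∀ x, MemSchatten ((n : ℝ) + 1) (D x))
    (a : Fin (n + 2) → S) (i : Fin (n + 2)) : MemSchatten 1 (markedProd D ρ a i) := by
  have hn : (0 : ℝ) < n + 1 := n.cast_add_one_pos
  simpa only [div_self hn.ne'] using memSchatten_markedProd hn hD a i

variable [CompleteSpace E]

/-- The functional `(a₀, …, aₖ₋₁) ↦ Trace(G D(a₀) ⋯ D(aₖ₋₁))`. Up to a scalar, the character of a
graded Fredholm module is of this form, with `G = εF` and `D(a) = [F, ρ(a)]`. -/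
def traceCochain (G : E →L[ℂ] E) (D : S → E →L[ℂ] E) {k : ℕ} (a : Fin k → S) : ℂ :=
  opTrace (G * (List.ofFn fun i => D (a i)).prod)

lemma traceCochain_rotate (hG : ∀ x, Commute G (D x))
    (hD : ∀ x, MemSchatten ((n : ℝ) + 1) (D x)) (a : Fin (n + 1) → S) :
    traceCochain G D (fun i => a (i + 1)) = traceCochain G D a := by
  have hprod : (List.ofFn fun i => D (a i)).prod =
      D (a 0) * (List.ofFn fun i : Fin n => D (a i.succ)).prod := by
    rw [List.ofFn_succ, List.prod_cons]
  have hprod' : (List.ofFn fun i => D (a (i + 1))).prod =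
      (List.ofFn fun i : Fin n => D (a i.succ)).prod * D (a 0) := by
    rw [List.ofFn_succ_last]
    simp
  rw [traceCochain, traceCochain, hprod, hprod']
  refine opTrace_mul_mul_comm (hD (a 0)).1 (hG (a 0)) ?_ ?_
  · exact hprod' ▸ memSchatten_one_prod_ofFn hD fun i => a (i + 1)
  · exact hprod ▸ memSchatten_one_prod_ofFn hD a

lemma opTrace_mul_markedProd_rotate (hG : ∀ x, Commute G (D x))
    (hD : ∀ x, MemSchatten ((n : ℝ) + 1) (D x)) (a : Fin (n + 2) → S) (i : Fin (n + 2)) :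
    opTrace (G * markedProd D ρ (fun j => a (j + 1)) i) =
      opTrace (G * markedProd D ρ a (i + 1)) := by
  have hmem := memSchatten_one_markedProd (ρ := ρ) hD a (i + 1)
  have hmem' := memSchatten_one_markedProd (ρ := ρ) hD (fun j => a (j + 1)) i
  cases i using Fin.lastCases with
  | last =>
    simp only [markedProd_last, Fin.last_add_one, markedProd_zero, Fin.coeSucc_eq_succ]
      at hmem hmem' ⊢
    set P := (List.ofFn fun j : Fin (n + 1) => D (a j.succ)).prod
    have hP : MemSchatten 1 P := memSchatten_one_prod_ofFn hD fun j => a j.succ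
    have hGP : Commute G P :=
      .list_prod_right _ _ (List.forall_mem_ofFn_iff.2 fun j => hG (a j.succ))
    exact (opTrace_mul_mul_comm hP.1 hGP hmem hmem').symm
  | cast i =>
    simp only [markedProd_castSucc, Fin.last_add_one, markedProd_succ, Fin.coeSucc_eq_succ]
      at hmem hmem' ⊢
    exact opTrace_mul_mul_comm (hD (a 0)).1 (hG (a 0)) hmem' hmem

lemma traceCochain_contractNth [Mul S] (hLeibniz : ∀ x y, D (x * y) = D x * ρ y + ρ x * D y)
    (hD : ∀ x, MemSchatten ((n : ℝ) + 1) (D x)) (a : Fin (n + 2) → S) (i : Fin (n + 1)) :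
    traceCochain G D (i.castSucc.contractNth (· * ·) a) =
      opTrace (G * markedProd D ρ a i.succ) + opTrace (G * markedProd D ρ a i.castSucc) := by
  rw [traceCochain, prod_ofFn_contractNth hLeibniz, mul_add, opTrace_add]
  · exact (memSchatten_one_markedProd hD a i.succ).const_mul one_pos G
  · exact (memSchatten_one_markedProd hD a i.castSucc).const_mul one_pos G

lemma sum_alternating_mul_succ_add_castSucc {R : Type*} [CommRing R] (X : Fin (n + 2) → R) :
    ∑ i : Fin (n + 1), (-1) ^ (i : ℕ) * (X i.succ + X i.castSucc) =
      X 0 + (-1) ^ n * X (Fin.last (n + 1)) := by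
  induction n with
  | zero => simpa using add_comm (X 1) (X 0)
  | succ n ih =>
    rw [Fin.sum_univ_castSucc]
    simp only [Fin.val_castSucc, Fin.succ_castSucc, Fin.val_last, Fin.succ_last]
    rw [ih fun i => X i.castSucc]
    simp only [Fin.castSucc_zero]
    ring

lemma hochB_traceCochain_eq_zero [Mul S] (hn : Even n)
    (hLeibniz : ∀ x y, D (x * y) = D x * ρ y + ρ x * D y)
    (hG : ∀ x, Commute G (D x)) (hD : ∀ x, MemSchatten ((n : ℝ) + 1) (D x))
    (a : Fin (n + 2) → S) : hochB n (traceCochain G D) a = 0 := by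
  let X : Fin (n + 2) → ℂ := fun i => opTrace (G * markedProd D ρ a i)
  have hface : ∀ i : Fin (n + 1),
      traceCochain G D (i.castSucc.contractNth (· * ·) a) = X i.succ + X i.castSucc :=
    traceCochain_contractNth hLeibniz hD a
  have hlast : traceCochain G D (fun j : Fin (n + 1) => if (j : ℕ) = 0
      then a (Fin.last (n + 1)) * a 0 else a j.castSucc) = X 0 + X (Fin.last (n + 1)) := by
    -- The last face of `a` is the zeroth face of the rotated tuple `(aₙ₊₁, a₀, …, aₙ)`.
    let c : Fin (n + 2) → S := Fin.cons (a (Fin.last (n + 1))) fun j => a j.castSucc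
    have hc : (fun j => c (j + 1)) = a := by
      ext j
      cases j using Fin.lastCases <;> simp [c]
    have hX : ∀ i, X i = opTrace (G * markedProd D ρ c (i + 1)) := fun i => by
      rw [← opTrace_mul_markedProd_rotate hG hD, hc]
    have h := traceCochain_contractNth hLeibniz (G := G) hD c 0
    rw [hX, hX, Fin.last_add_one, zero_add]
    refine (congrArg (traceCochain G D) (funext fun j => ?_)).trans h
    cases j using Fin.cases <;> simp [c, Fin.contractNth]
  calc hochB n (traceCochain G D) a
      = ∑ i : Fin (n + 1), (-1) ^ (i : ℕ) * (X i.succ + X i.castSucc) +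
          (-1) ^ (n + 1) * (X 0 + X (Fin.last (n + 1))) := by
        rw [← hlast]
        simp only [← hface]
        rfl
    _ = 0 := by
        rw [sum_alternating_mul_succ_add_castSucc, hn.neg_one_pow, hn.add_one.neg_one_pow]
        ring

end TraceCochain

section Anticommute

variable {R : Type*} [Ring R]

lemma mul_commutator_of_mul_self {F : R} (hF2 : F * F = 1) (X : R) :
    F * (F * X - X * F) = -((F * X - X * F) * F) := by
  rw [mul_sub, sub_mul, ← mul_assoc, hF2, mul_assoc X, hF2]
  noncomm_ring

lemma mul_commutator_of_anticommute {ε F X : R} (hFε : F * ε = -(ε * F))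
    (hεX : ε * X = X * ε) : ε * (F * X - X * F) = -((F * X - X * F) * ε) := by
  have hεF : ε * F = -(F * ε) := by rw [hFε, neg_neg]
  calc ε * (F * X - X * F) = ε * F * X - ε * X * F := by noncomm_ring
    _ = -(F * (X * ε)) + X * (F * ε) := by
      rw [hεX, mul_assoc X, hεF, neg_mul, mul_assoc F, hεX, mul_neg, sub_neg_eq_add]
    _ = -((F * X - X * F) * ε) := by noncomm_ring

lemma commute_mul_of_anticommute {x y z : R} (hx : x * z = -(z * x)) (hy : y * z = -(z * y)) :
    Commute (x * y) z := by
  rw [Commute, SemiconjBy, mul_assoc, hy, mul_neg, ← mul_assoc, hx, neg_mul, neg_neg, mul_assoc]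

lemma mul_list_prod_of_anticommute {x : R} {l : List R} (h : ∀ y ∈ l, x * y = -(y * x)) :
    x * l.prod = (-1) ^ l.length * (l.prod * x) := by
  induction l with
  | nil => simp
  | cons y l ih =>
    rw [List.forall_mem_cons] at h
    rw [List.prod_cons, ← mul_assoc, h.1, neg_mul, mul_assoc, ih h.2, List.length_cons, pow_succ,
      ← mul_assoc y, ((Commute.neg_one_right y).pow_right _).eq]
    noncomm_ring

lemma commute_list_prod_of_anticommute {x : R} {l : List R} (hl : Even l.length)
    (h : ∀ y ∈ l, x * y = -(y * x)) : Commute x l.prod := by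
  rw [Commute, SemiconjBy, mul_list_prod_of_anticommute h, hl.neg_one_pow, one_mul]

lemma prod_ofFn_smul {𝕜 : Type*} [CommSemiring 𝕜] [Algebra 𝕜 R] (c : 𝕜) {k : ℕ} (f : Fin k → R) :
    (List.ofFn fun i => c • f i).prod = c ^ k • (List.ofFn f).prod := by
  induction k with
  | zero => simp
  | succ k ih =>
    rw [List.ofFn_succ, List.prod_cons, ih, smul_mul_smul_comm, ← pow_succ', List.ofFn_succ,
      List.prod_cons]

end Anticommute

section Character

variable {E : Type*} [NormedAddCommGroup E] [InnerProductSpace ℂ E] {S : Type*} {n : ℕ}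
  {ε F : E →L[ℂ] E} {ρ : S → E →L[ℂ] E}

lemma gComm_of_commute (hε2 : ε * ε = 1) {θ : E →L[ℂ] E} (hθ : Commute ε θ) :
    gComm ε F θ = F * θ - θ * F := by
  have hconj : ε * θ * ε = θ := by rw [hθ.eq, mul_assoc, hε2, mul_one]
  have heven : evenPart ε θ = θ := by
    rw [evenPart, hconj, ← two_smul ℂ, inv_smul_smul₀ two_ne_zero]
  have hodd : oddPart ε θ = 0 := by rw [oddPart, hconj, sub_self, smul_zero]
  simp only [gComm, heven, hodd, mul_zero, zero_mul, add_zero]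

lemma charOp_eq (ρ : S → E →L[ℂ] E) (F : E →L[ℂ] E) (a : Fin (n + 1) → S) :
    charOp ρ F n a = Complex.I ^ n •
      (ρ (a 0) * (List.ofFn fun i : Fin n =>
        F * ρ (a i.succ) - ρ (a i.succ) * F).prod) := by
  have hlist : (List.range' 1 n).map
      (fun j => dOp F (ρ (a ⟨j % (n + 1), Nat.mod_lt _ n.succ_pos⟩))) =
      List.ofFn fun i : Fin n => dOp F (ρ (a i.succ)) := by
    refine List.ext_getElem (by simp) fun i hi _ => ?_
    have hin : i < n := by simpa using hi
    have hmod : (1 + i) % (n + 1) = i + 1 := by rw [add_comm, Nat.mod_eq_of_lt (by omega)]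
    simp [hmod, Fin.succ]
  rw [charOp, opList, hlist, ← mul_smul_comm, ← prod_ofFn_smul]
  rfl

lemma gComm_charOp (hn : Even n) (hε2 : ε * ε = 1) (hF2 : F * F = 1) (hFε : F * ε = -(ε * F))
    (heven : ∀ x, ε * ρ x = ρ x * ε) (a : Fin (n + 1) → S) :
    gComm ε F (charOp ρ F n a) =
      Complex.I ^ n • (List.ofFn fun i => F * ρ (a i) - ρ (a i) * F).prod := by
  set P := (List.ofFn fun i : Fin n => F * ρ (a i.succ) - ρ (a i.succ) * F).prod with hP
  have hFP : Commute F P := commute_list_prod_of_anticommute (by simpa using hn)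
    (List.forall_mem_ofFn_iff.2 fun i => mul_commutator_of_mul_self hF2 _)
  have hεP : Commute ε P := commute_list_prod_of_anticommute (by simpa using hn)
    (List.forall_mem_ofFn_iff.2 fun i => mul_commutator_of_anticommute hFε (heven _))
  have hθ : Commute ε (Complex.I ^ n • (ρ (a 0) * P)) :=
    (Commute.mul_right (heven (a 0)) hεP).smul_right _
  rw [charOp_eq, ← hP, gComm_of_commute hε2 hθ, List.ofFn_succ, List.prod_cons, ← hP,
    mul_smul_comm, smul_mul_assoc, ← smul_sub, sub_mul, mul_assoc (ρ (a 0)), ← hFP.eq]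
  simp only [mul_assoc]

lemma hochB_const_mul [Mul S] (c : ℂ) (ψ : (Fin (n + 1) → S) → ℂ) (a : Fin (n + 2) → S) :
    hochB n (fun a => c * ψ a) a = c * hochB n ψ a := by
  simp only [hochB, mul_add, Finset.mul_sum, mul_left_comm]

lemma tauChar_eq_traceCochain [CompleteSpace E] (m : ℕ) (hn : Even n) (hε2 : ε * ε = 1)
    (hF2 : F * F = 1) (hFε : F * ε = -(ε * F)) (heven : ∀ x, ε * ρ x = ρ x * ε) :
    tauChar ρ ε F m n = fun a =>
      (2 * Complex.I * Real.pi) ^ m * m.factorial * (2⁻¹ * Complex.I ^ n) *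
        traceCochain (ε * F) (fun x => F * ρ x - ρ x * F) a := by
  ext a
  rw [tauChar, Trs, gComm_charOp hn hε2 hF2 hFε heven, mul_smul_comm, opTrace_smul, traceCochain]
  ring

end Character

theorem tau_cyclic_cocycle_general {E : Type*} [NormedAddCommGroup E] [InnerProductSpace ℂ E]
    [CompleteSpace E] {S : Type*} [Mul S] (m n : ℕ) (hn : Even n) (ε F : E →L[ℂ] E)
    (hε2 : ε * ε = 1) (hF2 : F * F = 1) (hFε : F * ε = -(ε * F)) (ρ : S →ₙ* (E →L[ℂ] E))
    (heven : ∀ x, ε * ρ x = ρ x * ε)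
    (hS : ∀ x, MemSchatten ((n : ℝ) + 1) (F * ρ x - ρ x * F)) :
    (∀ a : Fin (n + 1) → S, MemSchatten 1 (gComm ε F (charOp ρ F n a))) ∧
    (∀ a : Fin (n + 1) → S,
      tauChar ρ ε F m n (fun i => a (i + 1)) = (-1 : ℂ) ^ n * tauChar ρ ε F m n a) ∧
    (∀ a : Fin (n + 2) → S, hochB n (tauChar ρ ε F m n) a = 0) := by
  have hcomm : ∀ x, Commute (ε * F) (F * ρ x - ρ x * F) := fun x =>
    commute_mul_of_anticommute (mul_commutator_of_anticommute hFε (heven x))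
      (mul_commutator_of_mul_self hF2 _)
  have hLeibniz : ∀ x y, F * ρ (x * y) - ρ (x * y) * F =
      (F * ρ x - ρ x * F) * ρ y + ρ x * (F * ρ y - ρ y * F) := fun x y => by
    rw [map_mul]
    noncomm_ring
  rw [tauChar_eq_traceCochain m hn hε2 hF2 hFε heven]
  refine ⟨fun a => ?_, fun a => ?_, fun a => ?_⟩
  · rw [gComm_charOp hn hε2 hF2 hFε heven]
    exact (memSchatten_one_prod_ofFn hS a).const_smul one_pos _
  · simp only [hn.neg_one_pow, one_mul, traceCochain_rotate hcomm hS a]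
  · rw [hochB_const_mul, hochB_traceCochain_eq_zero hn hLeibniz hcomm hS, mul_zero]

/-- Let `n = 2m` be a positive even integer, `(H, ε)` ℤ₂-graded, `F` bounded with `F² = 1`,
`Fε = -εF`, `A` a ℂ-algebra and `ρ : A → B(H)` an algebra homomorphism into even operators
with `Fρ(a) - ρ(a)F` being `(n+1)`-Schatten for all `a`.  Then the `(n+1)`-linear functional
`τⁿ(a₀,…,aₙ) = (2iπ)^m m! Tr_s(ρ(a₀)dρ(a₁)⋯dρ(aₙ))` is well defined (the relevant graded
commutator with `F` is trace class) and is a cyclic cocycle: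
`τⁿ(a₁,…,aₙ,a₀) = (-1)ⁿ τⁿ(a₀,…,aₙ)` and `bτⁿ = 0`. -/
theorem tau_cyclic_cocycle (m n : ℕ) (hm : 0 < m) (hn : n = 2 * m)
    (ε F : H →L[ℂ] H) (hε : IsSelfAdjoint ε) (hε2 : ε * ε = 1) (hF2 : F * F = 1)
    (hFε : F * ε = -(ε * F))
    (ρ : A →ₙₐ[ℂ] (H →L[ℂ] H)) (heven : ∀ a : A, ε * ρ a = ρ a * ε)
    (hS : ∀ a : A, MemSchatten ((n : ℝ) + 1) (F * ρ a - ρ a * F)) :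
    (∀ a : Fin (n + 1) → A, MemSchatten 1 (gComm ε F (charOp (⇑ρ) F n a))) ∧
    (∀ a : Fin (n + 1) → A,
      tauChar (⇑ρ) ε F m n (fun i => a (i + 1)) = (-1 : ℂ) ^ n * tauChar (⇑ρ) ε F m n a) ∧
    (∀ a : Fin (n + 2) → A, hochB n (tauChar (⇑ρ) ε F m n) a = 0) :=
  tau_cyclic_cocycle_general m n (hn ▸ even_two_mul m) ε F hε2 hF2 hFε ρ.toMulHom heven hS
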